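/- Bowen's formula: Let (Λ,f) be a C¹ conformal repeller. Then the Hausdorff dimension of Λ coincides with its lower and upper box dimensions, and the common value is the unique zero s_crit of the pressure function: dimH Λ = dim̲_B Λ = dim̄_B Λ = s_crit, where P(s_crit,Λ,f)=0, P(s,Λ,f)>0 for 0≤s<s_crit and P(s,Λ,f)<0 for s>s_crit. -/

import Mathlib

open Filter Topology Metric Set MeasureTheory
open scoped Classical ENNReal

noncomputable section

/-- `Df` is the conformal derivative of `f`: the double limit
`Df x = lim_{u ≠ v → x} d(f u, f v)/d(u,v)` exists at every point. -/
def IsConfDeriv {Λ : Type*} [MetricSpace Λ] (f : Λ → Λ) (Df : Λ → ℝ) : Prop :=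
  ∀ x : Λ, Filter.Tendsto (fun p : Λ × Λ => dist (f p.1) (f p.2) / dist p.1 p.2)
    ((𝓝 x ×ˢ 𝓝 x) ⊓ 𝓟 {p : Λ × Λ | p.1 ≠ p.2}) (𝓝 (Df x))

/-- `Df^{(n)}_x = Df_{f^{n-1}x} ⋯ Df_x`, the conformal derivative along the orbit. -/
def orbDeriv {Λ : Type*} [MetricSpace Λ] (f : Λ → Λ) (Df : Λ → ℝ) (n : ℕ) (x : Λ) : ℝ :=
  ∏ k ∈ Finset.range n, Df (f^[k] x)

/-- (C2): uniform expansion, `Df^{(n)}_x ≥ C βⁿ` for some `C > 0`, `β > 1`. -/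
def UnifExpanding {Λ : Type*} [MetricSpace Λ] (f : Λ → Λ) (Df : Λ → ℝ) : Prop :=
  ∃ C : ℝ, 0 < C ∧ ∃ β : ℝ, 1 < β ∧ ∀ (x : Λ) (n : ℕ), C * β ^ n ≤ orbDeriv f Df n x

/-- dynamical pressure `P(s,Λ,f) = liminf_n (1/n) log sup_y Σ_{f^n x = y} (Df^{(n)}_x)^{-s}`. -/
def pressure {Λ : Type*} [MetricSpace Λ] (f : Λ → Λ) (Df : Λ → ℝ) (s : ℝ) : ℝ :=
  Filter.liminf (fun n : ℕ =>
    (n : ℝ)⁻¹ * Real.log (⨆ y : Λ, ∑' x : ↥(f^[n] ⁻¹' {y}), orbDeriv f Df n (x : Λ) ^ (-s)))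
    Filter.atTop

/-- `N(δ)`: the minimal number of open balls of radius `δ` needed to cover the space. -/
def coverNum (Λ : Type*) [MetricSpace Λ] (δ : ℝ) : ℕ :=
  sInf {n : ℕ | ∃ t : Finset Λ, t.card = n ∧ ∀ x : Λ, ∃ c ∈ t, dist x c < δ}

/-- upper box dimension `limsup_{δ→0⁺} log N(δ) / (-log δ)`. -/
def upperBoxDim (Λ : Type*) [MetricSpace Λ] : ℝ≥0∞ :=
  Filter.limsup (fun δ : ℝ => ENNReal.ofReal (Real.log (coverNum Λ δ) / (-Real.log δ))) (𝓝[>] 0)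

/-- lower box dimension `liminf_{δ→0⁺} log N(δ) / (-log δ)`. -/
def lowerBoxDim (Λ : Type*) [MetricSpace Λ] : ℝ≥0∞ :=
  Filter.liminf (fun δ : ℝ => ENNReal.ofReal (Real.log (coverNum Λ δ) / (-Real.log δ))) (𝓝[>] 0)

/-!
Uniform expansion and continuity of the derivative give bounded distortion: while the orbits of two
points stay `ρ`-close, `fⁿ` is a similarity of ratio `Df⁽ⁿ⁾` up to a factor `θⁿ`, with `θ > 1` as
close to `1` as desired.

If the pressure at `s` is negative, then at some time `n` the partition sum beats the distortion.
Covering the space by the corresponding Bowen balls turns this into a renewal inequality for the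
covering numbers, so that `N(δ) = O(δ⁻ˢ)`. Conversely, if the `s`-dimensional Hausdorff measure
vanishes, the space is covered by finitely many small balls with `∑ rˢ` small. Each of them is
blown up to scale `ρ` by an iterate of `f` which is injective on it, so that the partition sums at
any exponent `s' > s` satisfy a renewal inequality; they are therefore bounded, and the pressure at
`s'` is at most `0`. Hence `s_crit ≤ dimH ≤ lowerBoxDim ≤ upperBoxDim ≤ s_crit`.
-/

section ConformalRepeller

variable {X : Type*} [MetricSpace X] {f : X → X} {Df : X → ℝ}

/-! ### Derivatives along orbits -/

lemma orbDeriv_zero (x : X) : orbDeriv f Df 0 x = 1 := Finset.prod_range_zero _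

lemma orbDeriv_one (x : X) : orbDeriv f Df 1 x = Df x := by simp [orbDeriv]

lemma orbDeriv_add (m n : ℕ) (x : X) :
    orbDeriv f Df (m + n) x = orbDeriv f Df m x * orbDeriv f Df n (f^[m] x) := by
  simp only [orbDeriv, Finset.prod_range_add]
  congr 1
  refine Finset.prod_congr rfl fun k _ => ?_
  rw [← Function.iterate_add_apply, add_comm]

lemma orbDeriv_succ (n : ℕ) (x : X) :
    orbDeriv f Df (n + 1) x = orbDeriv f Df n x * Df (f^[n] x) := by
  rw [orbDeriv_add, orbDeriv_one]

lemma orbDeriv_pos (hpos : ∀ x, 0 < Df x) (n : ℕ) (x : X) : 0 < orbDeriv f Df n x :=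
  Finset.prod_pos fun _ _ => hpos _

lemma abs_log_orbDeriv_le (hpos : ∀ x, 0 < Df x) {B : ℝ} (hB : ∀ x, |Real.log (Df x)| ≤ B)
    (n : ℕ) (x : X) : |Real.log (orbDeriv f Df n x)| ≤ n * B := by
  rw [orbDeriv, Real.log_prod fun _ _ => (hpos _).ne']
  calc |∑ k ∈ Finset.range n, Real.log (Df (f^[k] x))|
      ≤ ∑ k ∈ Finset.range n, |Real.log (Df (f^[k] x))| := Finset.abs_sum_le_sum_abs _ _
    _ ≤ ∑ _k ∈ Finset.range n, B := Finset.sum_le_sum fun _ _ => hB _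
    _ = n * B := by rw [Finset.sum_const, Finset.card_range, nsmul_eq_mul]

lemma UnifExpanding.deriv_pos (hexp : UnifExpanding f Df) (x : X) : 0 < Df x := by
  obtain ⟨C, hC, β, hβ, h⟩ := hexp
  rw [← orbDeriv_one (f := f) (Df := Df) x]
  exact lt_of_lt_of_le (by positivity) (h x 1)

/-! ### Conformal derivatives -/

lemma neBot_nhds_prod_inf_offDiag {Y : Type*} [TopologicalSpace Y] [PerfectSpace Y] (x : Y) :
    ((𝓝 x ×ˢ 𝓝 x) ⊓ 𝓟 {p : Y × Y | p.1 ≠ p.2}).NeBot := by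
  have : (𝓝[≠] x).NeBot := PerfectSpace.not_isolated x
  have hleft : Tendsto (fun u : Y => (u, x)) (𝓝[≠] x) (𝓝 x ×ˢ 𝓝 x) :=
    (tendsto_id.mono_left nhdsWithin_le_nhds).prodMk tendsto_const_nhds
  exact (tendsto_inf.2 ⟨hleft, tendsto_principal.2 self_mem_nhdsWithin⟩).neBot

namespace IsConfDeriv

lemma eventually_mul_dist_le_and_dist_le_mul (hconf : IsConfDeriv f Df) {x : X} {a b : ℝ}
    (ha : a < Df x) (hb : Df x < b) :
    ∀ᶠ p : X × X in 𝓝 (x, x), a * dist p.1 p.2 ≤ dist (f p.1) (f p.2) ∧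
      dist (f p.1) (f p.2) ≤ b * dist p.1 p.2 := by
  have hratio := hconf x (Ioo_mem_nhds ha hb)
  rw [Filter.mem_map, mem_inf_principal, ← nhds_prod_eq] at hratio
  filter_upwards [hratio] with p hp
  obtain heq | hne := eq_or_ne p.1 p.2
  · simp [heq]
  · have hdist : 0 < dist p.1 p.2 := dist_pos.2 hne
    exact ⟨((lt_div_iff₀ hdist).1 (hp hne).1).le, ((div_lt_iff₀ hdist).1 (hp hne).2).le⟩

lemma continuous (hconf : IsConfDeriv f Df) : Continuous f := by
  refine continuous_iff_continuousAt.2 fun x => tendsto_iff_dist_tendsto_zero.2 ?_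
  have hlip : ∀ᶠ u in 𝓝 x, dist (f u) (f x) ≤ (Df x + 1) * dist u x :=
    (Continuous.prodMk_left x).continuousAt.eventually
      ((hconf.eventually_mul_dist_le_and_dist_le_mul (sub_one_lt _) (lt_add_one _)).mono
        fun _ hp => hp.2)
  refine squeeze_zero' (.of_forall fun _ => dist_nonneg) hlip ?_
  simpa using (tendsto_iff_dist_tendsto_zero.1 (tendsto_id (x := 𝓝 x))).const_mul (Df x + 1)

lemma continuous_deriv [PerfectSpace X] (hconf : IsConfDeriv f Df) : Continuous Df := by
  refine continuous_iff_continuousAt.2 fun x =>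
    (closed_nhds_basis (Df x)).tendsto_right_iff.2 fun s ⟨hs, hs_closed⟩ => ?_
  have hratio := hconf x hs
  rw [Filter.mem_map, mem_inf_principal, ← nhds_prod_eq] at hratio
  have hdiag : ContinuousAt (fun z : X => (z, z)) x := by fun_prop
  filter_upwards [hdiag.eventually (Eventually.eventually_nhds hratio)] with z hz
  have := neBot_nhds_prod_inf_offDiag z
  refine hs_closed.mem_of_tendsto (hconf z) ?_
  rw [nhds_prod_eq] at hz
  exact eventually_inf_principal.2 hz

lemma exists_abs_log_deriv_le [CompactSpace X] [PerfectSpace X] (hconf : IsConfDeriv f Df)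
    (hpos : ∀ x, 0 < Df x) : ∃ B, ∀ x, |Real.log (Df x)| ≤ B := by
  obtain ⟨B, hB⟩ := isCompact_univ.exists_bound_of_continuousOn
    (hconf.continuous_deriv.log fun x => (hpos x).ne').continuousOn
  exact ⟨B, fun x => hB x (mem_univ x)⟩

end IsConfDeriv

/-- Bounded distortion at scale `ρ`: on every ball of radius `ρ` the map `f` is, up to the
factor `θ`, a similarity whose ratio is the derivative at the center, and the derivative itself
varies by at most the factor `θ`. -/
structure IsDistortionBound (f : X → X) (Df : X → ℝ) (θ ρ : ℝ) : Prop where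
  deriv_pos : ∀ x, 0 < Df x
  one_lt : 1 < θ
  radius_pos : 0 < ρ
  mul_dist_le : ∀ {c u v : X}, u ∈ ball c ρ → v ∈ ball c ρ →
    Df c * dist u v ≤ θ * dist (f u) (f v)
  dist_map_le : ∀ {c u v : X}, u ∈ ball c ρ → v ∈ ball c ρ →
    dist (f u) (f v) ≤ θ * Df c * dist u v
  deriv_le : ∀ {c u : X}, u ∈ ball c ρ → Df c ≤ θ * Df u

lemma IsConfDeriv.exists_ball_forall_distortion [PerfectSpace X] (hconf : IsConfDeriv f Df)
    {x : X} (hx : 0 < Df x) {t : ℝ} (ht : 1 < t) :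
    ∃ R > 0, ∀ u ∈ ball x R, (Df x ≤ t * Df u ∧ Df u ≤ t * Df x) ∧
      ∀ v ∈ ball x R, Df x * dist u v ≤ t * dist (f u) (f v) ∧
        dist (f u) (f v) ≤ t * Df x * dist u v := by
  have ht₀ : 0 < t := by linarith
  have hlow : Df x / t < Df x := div_lt_self hx ht
  have hup : Df x < t * Df x := lt_mul_of_one_lt_left hx ht
  obtain ⟨R₁, hR₁, hratio⟩ := Metric.eventually_nhds_iff_ball.1
    (hconf.eventually_mul_dist_le_and_dist_le_mul hlow hup)
  obtain ⟨R₂, hR₂, hderiv⟩ := Metric.eventually_nhds_iff_ball.1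
    (hconf.continuous_deriv.continuousAt.eventually (Ioo_mem_nhds hlow hup))
  refine ⟨min R₁ R₂, lt_min hR₁ hR₂, fun u hu => ⟨?_, fun v hv => ?_⟩⟩
  · obtain ⟨hl, hr⟩ := hderiv u (ball_subset_ball (min_le_right _ _) hu)
    exact ⟨((div_lt_iff₀' ht₀).1 hl).le, hr.le⟩
  · have huv : (u, v) ∈ ball (x, x) R₁ := by
      rw [← ball_prod_same]
      exact ⟨ball_subset_ball (min_le_left _ _) hu, ball_subset_ball (min_le_left _ _) hv⟩
    obtain ⟨hl, hr⟩ := hratio _ huv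
    exact ⟨(div_le_iff₀' ht₀).1 (by rwa [← div_mul_eq_mul_div]), hr⟩

-- All the local ratios and derivatives lie within a factor `√θ` of the derivative at the center
-- of a covering ball, so any two of them are within a factor `θ` of each other.
lemma IsConfDeriv.exists_isDistortionBound [CompactSpace X] [PerfectSpace X]
    (hconf : IsConfDeriv f Df) (hpos : ∀ x, 0 < Df x) {θ : ℝ} (hθ : 1 < θ) :
    ∃ ρ, IsDistortionBound f Df θ ρ := by
  obtain ⟨t, ht, rfl⟩ : ∃ t : ℝ, 1 < t ∧ θ = t * t :=
    ⟨√θ, Real.lt_sqrt_of_sq_lt (by simpa using hθ), (Real.mul_self_sqrt (by linarith)).symm⟩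
  have ht₀ : 0 < t := by linarith
  choose R hR hRball using fun x => hconf.exists_ball_forall_distortion (hpos x) ht
  obtain ⟨ρ, hρ, hρR⟩ := lebesgue_number_lemma_of_metric (c := fun x => ball x (R x))
    isCompact_univ (fun _ => isOpen_ball) (fun x _ => mem_iUnion.2 ⟨x, mem_ball_self (hR x)⟩)
  choose x hx using fun c => hρR c (mem_univ c)
  have hcenter : ∀ c, c ∈ ball (x c) (R (x c)) := fun c => hx c (mem_ball_self hρ)
  refine ⟨ρ, hpos, hθ, hρ, fun {c u v} hu hv => ?_, fun {c u v} hu hv => ?_, fun {c u} hu => ?_⟩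
  · calc Df c * dist u v ≤ t * Df (x c) * dist u v := by
          gcongr; exact (hRball (x c) c (hcenter c)).1.2
      _ = t * (Df (x c) * dist u v) := mul_assoc _ _ _
      _ ≤ t * (t * dist (f u) (f v)) :=
          mul_le_mul_of_nonneg_left ((hRball (x c) u (hx c hu)).2 v (hx c hv)).1 ht₀.le
      _ = t * t * dist (f u) (f v) := (mul_assoc _ _ _).symm
  · calc dist (f u) (f v) ≤ t * Df (x c) * dist u v :=
          ((hRball (x c) u (hx c hu)).2 v (hx c hv)).2
      _ ≤ t * (t * Df c) * dist u v := by
          gcongr; exact (hRball (x c) c (hcenter c)).1.1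
      _ = t * t * Df c * dist u v := by rw [mul_assoc t t]
  · calc Df c ≤ t * Df (x c) := (hRball (x c) c (hcenter c)).1.2
      _ ≤ t * (t * Df u) := by gcongr; exact (hRball (x c) u (hx c hu)).1.1
      _ = t * t * Df u := (mul_assoc _ _ _).symm

/-! ### Bowen balls -/

/-- The Bowen ball of order `n`: the points whose orbit stays `ρ`-close to that of `c` during the
times `0, …, n - 1`. -/
def bowenBall (f : X → X) (n : ℕ) (ρ : ℝ) (c : X) : Set X :=
  {x | ∀ k < n, f^[k] x ∈ ball (f^[k] c) ρ}

lemma mem_bowenBall_succ {n : ℕ} {ρ : ℝ} {c x : X} :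
    x ∈ bowenBall f (n + 1) ρ c ↔ x ∈ bowenBall f n ρ c ∧ f^[n] x ∈ ball (f^[n] c) ρ :=
  Nat.forall_lt_succ_right

lemma mem_bowenBall_succ' {n : ℕ} {ρ : ℝ} {c x : X} :
    x ∈ bowenBall f (n + 1) ρ c ↔ x ∈ ball c ρ ∧ f x ∈ bowenBall f n ρ (f c) :=
  Nat.forall_lt_succ_left

lemma mem_bowenBall_self {n : ℕ} {ρ : ℝ} (hρ : 0 < ρ) (c : X) : c ∈ bowenBall f n ρ c :=
  fun _ _ => mem_ball_self hρ

namespace IsDistortionBound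

variable {θ ρ : ℝ} (hd : IsDistortionBound f Df θ ρ)
include hd

lemma orbDeriv_mul_dist_le {n : ℕ} {c u v : X} (hu : u ∈ bowenBall f n ρ c)
    (hv : v ∈ bowenBall f n ρ c) :
    orbDeriv f Df n c * dist u v ≤ θ ^ n * dist (f^[n] u) (f^[n] v) := by
  have hθ₀ : 0 < θ := zero_lt_one.trans hd.one_lt
  induction n with
  | zero => simp [orbDeriv_zero]
  | succ n ih =>
    rw [mem_bowenBall_succ] at hu hv
    have hDf := hd.deriv_pos (f^[n] c)
    rw [orbDeriv_succ, Function.iterate_succ_apply', Function.iterate_succ_apply']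
    calc orbDeriv f Df n c * Df (f^[n] c) * dist u v
        = Df (f^[n] c) * (orbDeriv f Df n c * dist u v) := by ring
      _ ≤ Df (f^[n] c) * (θ ^ n * dist (f^[n] u) (f^[n] v)) :=
          mul_le_mul_of_nonneg_left (ih hu.1 hv.1) hDf.le
      _ = θ ^ n * (Df (f^[n] c) * dist (f^[n] u) (f^[n] v)) := by ring
      _ ≤ θ ^ n * (θ * dist (f (f^[n] u)) (f (f^[n] v))) :=
          mul_le_mul_of_nonneg_left (hd.mul_dist_le hu.2 hv.2) (by positivity)
      _ = θ ^ (n + 1) * dist (f (f^[n] u)) (f (f^[n] v)) := by ring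

lemma dist_iterate_le {n : ℕ} {c u : X} (hu : u ∈ bowenBall f n ρ c) :
    dist (f^[n] u) (f^[n] c) ≤ θ ^ n * orbDeriv f Df n c * dist u c := by
  have hθ₀ : 0 < θ := zero_lt_one.trans hd.one_lt
  induction n with
  | zero => simp [orbDeriv_zero]
  | succ n ih =>
    rw [mem_bowenBall_succ] at hu
    have hDf := hd.deriv_pos (f^[n] c)
    rw [orbDeriv_succ, Function.iterate_succ_apply', Function.iterate_succ_apply']
    calc dist (f (f^[n] u)) (f (f^[n] c))
        ≤ θ * Df (f^[n] c) * dist (f^[n] u) (f^[n] c) :=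
          hd.dist_map_le hu.2 (mem_ball_self hd.radius_pos)
      _ ≤ θ * Df (f^[n] c) * (θ ^ n * orbDeriv f Df n c * dist u c) := by gcongr; exact ih hu.1
      _ = θ ^ (n + 1) * (orbDeriv f Df n c * Df (f^[n] c)) * dist u c := by ring

lemma orbDeriv_le {n : ℕ} {c u : X} (hu : u ∈ bowenBall f n ρ c) :
    orbDeriv f Df n c ≤ θ ^ n * orbDeriv f Df n u :=
  calc orbDeriv f Df n c ≤ ∏ k ∈ Finset.range n, θ * Df (f^[k] u) :=
        Finset.prod_le_prod (fun _ _ => (hd.deriv_pos _).le)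
          fun k hk => hd.deriv_le (hu k (Finset.mem_range.1 hk))
    _ = θ ^ n * orbDeriv f Df n u := by
        rw [Finset.prod_mul_distrib, Finset.prod_const, Finset.card_range, orbDeriv]

lemma injOn_iterate_bowenBall (n : ℕ) (c : X) : InjOn f^[n] (bowenBall f n ρ c) := by
  intro u hu v hv huv
  have hle := hd.orbDeriv_mul_dist_le hu hv
  rw [huv, dist_self, mul_zero] at hle
  exact dist_le_zero.1 (nonpos_of_mul_nonpos_right hle (orbDeriv_pos hd.deriv_pos n c))

lemma ball_subset_bowenBall {n : ℕ} {c : X} {r : ℝ}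
    (hr : ∀ k < n, θ ^ k * orbDeriv f Df k c * r ≤ ρ) : ball c r ⊆ bowenBall f n ρ c := by
  have hθ₀ : 0 < θ := zero_lt_one.trans hd.one_lt
  intro u hu
  induction n with
  | zero => exact fun k hk => absurd hk k.not_lt_zero
  | succ n ih =>
    have hu_n : u ∈ bowenBall f n ρ c := ih fun k hk => hr k (hk.trans n.lt_succ_self)
    have hD := orbDeriv_pos (f := f) hd.deriv_pos n c
    refine mem_bowenBall_succ.2 ⟨hu_n, mem_ball.2 ?_⟩
    calc dist (f^[n] u) (f^[n] c) ≤ θ ^ n * orbDeriv f Df n c * dist u c := hd.dist_iterate_le hu_n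
      _ < θ ^ n * orbDeriv f Df n c * r := by gcongr; exact hu
      _ ≤ ρ := hr n n.lt_succ_self

end IsDistortionBound

-- For `η ≤ 0` the inclusion is trivial, which allows compactness to be applied to the full
-- neighbourhood filter of `η = 0`.
lemma exists_forall_ball_subset_image_ball_of_isOpenMap {Y Z : Type*} [PseudoMetricSpace Y]
    [CompactSpace Y] [PseudoMetricSpace Z] {g : Y → Z} (hopen : IsOpenMap g) (hcont : Continuous g)
    {ρ : ℝ} (hρ : 0 < ρ) : ∃ η > 0, ∀ x, ball (g x) η ⊆ g '' ball x ρ := by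
  have hlocal : ∀ x ∈ univ, ∀ᶠ z : ℝ × Y in 𝓝 (0, x), ball (g z.2) z.1 ⊆ g '' ball z.2 ρ := by
    intro x _
    obtain ⟨e, he, hball⟩ := Metric.isOpen_iff.1 (hopen (ball x (ρ / 2)) isOpen_ball) (g x)
      (mem_image_of_mem g (mem_ball_self (half_pos hρ)))
    have hnear : ∀ᶠ z : ℝ × Y in 𝓝 (0, x), z.1 + dist (g z.2) (g x) < e :=
      ContinuousAt.eventually_lt (by fun_prop) continuousAt_const (by simpa using he)
    have hcenter : ∀ᶠ z : ℝ × Y in 𝓝 (0, x), ρ / 2 + dist x z.2 < ρ :=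
      ContinuousAt.eventually_lt (by fun_prop) continuousAt_const (by simpa using hρ)
    filter_upwards [hnear, hcenter] with z hz hz'
    exact (ball_subset_ball' hz.le).trans (hball.trans (image_mono (ball_subset_ball' hz'.le)))
  obtain ⟨η, hη, hη_pos⟩ :=
    (((isCompact_univ.eventually_forall_of_forall_eventually
      (P := fun η x => ball (g x) η ⊆ g '' ball x ρ) hlocal).filter_mono nhdsWithin_le_nhds).and
        (self_mem_nhdsWithin (a := (0 : ℝ)) (s := Ioi 0))).exists
  exact ⟨η, hη_pos, fun x => hη x (mem_univ x)⟩

-- Expansion makes the lifted point land closer to `x` than the radius of uniform openness, so the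
-- next preimage can be chosen.
lemma IsDistortionBound.exists_forall_mem_bowenBall_of_mem_ball [CompactSpace X] {θ ρ : ℝ}
    (hd : IsDistortionBound f Df θ ρ) (hopen : IsOpenMap f) (hcont : Continuous f) {C : ℝ}
    (hC : 0 < C) (hexp : ∀ x n, C * θ ^ n ≤ orbDeriv f Df n x) :
    ∃ r > 0, ∀ (n : ℕ) (x y : X), y ∈ ball (f^[n] x) r →
      ∃ x', f^[n] x' = y ∧ x ∈ bowenBall f n ρ x' := by
  have hθ₀ : 0 < θ := zero_lt_one.trans hd.one_lt
  obtain ⟨η, hη, hlift⟩ :=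
    exists_forall_ball_subset_image_ball_of_isOpenMap hopen hcont hd.radius_pos
  suffices h : ∀ (n : ℕ) (x y : X), y ∈ ball (f^[n] x) (C * η) →
      ∃ x', f^[n] x' = y ∧ x ∈ bowenBall f n ρ x' ∧ x' ∈ ball x η from
    ⟨C * η, by positivity, fun n x y hy =>
      (h n x y hy).imp fun _ hx' => ⟨hx'.1, hx'.2.1⟩⟩
  intro n
  induction n with
  | zero =>
    intro x y hy
    have hC₁ : C ≤ 1 := by simpa [orbDeriv_zero] using hexp x 0
    exact ⟨y, rfl, fun k hk => absurd hk k.not_lt_zero,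
      ball_subset_ball (mul_le_of_le_one_left hη.le hC₁) hy⟩
  | succ n ih =>
    intro x y hy
    obtain ⟨z, rfl, hz_bowen, hz_ball⟩ := ih (f x) y hy
    obtain ⟨x', hx', rfl⟩ := hlift x hz_ball
    have hx_bowen : x ∈ bowenBall f (n + 1) ρ x' :=
      mem_bowenBall_succ'.2 ⟨mem_ball_comm.1 hx', hz_bowen⟩
    refine ⟨x', rfl, hx_bowen, ?_⟩
    have hdist : C * θ ^ (n + 1) * dist x' x < C * θ ^ (n + 1) * η :=
      calc C * θ ^ (n + 1) * dist x' x ≤ orbDeriv f Df (n + 1) x' * dist x' x := by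
            gcongr; exact hexp x' (n + 1)
        _ ≤ θ ^ (n + 1) * dist (f^[n + 1] x') (f^[n + 1] x) :=
            hd.orbDeriv_mul_dist_le (mem_bowenBall_self hd.radius_pos x') hx_bowen
        _ < θ ^ (n + 1) * (C * η) := by gcongr; exact hy
        _ = C * θ ^ (n + 1) * η := by ring
    exact lt_of_mul_lt_mul_left hdist (by positivity)

/-! ### Partition sums -/

/-- The sum of `(Df^{(n)}_x)^{-s}` over the fiber `fⁿ x = y`. It takes values in `ℝ≥0∞`, so that it
can be estimated before the fiber is known to be finite. -/
def fiberSum (f : X → X) (Df : X → ℝ) (s : ℝ) (n : ℕ) (y : X) : ℝ≥0∞ :=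
  ∑' x : f^[n] ⁻¹' {y}, ENNReal.ofReal (orbDeriv f Df n x ^ (-s))

/-- The partition function `sup_y Σ_{fⁿ x = y} (Df^{(n)}_x)^{-s}`, whose exponential growth rate in
`n` is the pressure. -/
def partitionSum (f : X → X) (Df : X → ℝ) (s : ℝ) (n : ℕ) : ℝ≥0∞ := ⨆ y, fiberSum f Df s n y

/-- The real logarithm of the partition function; it is meaningful because the latter is neither
`0` nor `∞` on a repeller. -/
def logPartitionSum (f : X → X) (Df : X → ℝ) (s : ℝ) (n : ℕ) : ℝ :=
  Real.log (partitionSum f Df s n).toReal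

lemma fiberSum_le_partitionSum (s : ℝ) (n : ℕ) (y : X) :
    fiberSum f Df s n y ≤ partitionSum f Df s n := le_iSup _ y

lemma tsum_fiber_inter_le_mul_fiberSum (hpos : ∀ x, 0 < Df x) {U : Set X} {m : ℕ} {s : ℝ}
    {w : ℝ≥0∞} (hinj : InjOn f^[m] U)
    (hw : ∀ u ∈ U, ENNReal.ofReal (orbDeriv f Df m u ^ (-s)) ≤ w) (n : ℕ) (y : X) :
    ∑' x : ↥(f^[m + n] ⁻¹' {y} ∩ U), ENNReal.ofReal (orbDeriv f Df (m + n) x ^ (-s)) ≤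
      w * fiberSum f Df s n y := by
  let φ : ↥(f^[m + n] ⁻¹' {y} ∩ U) → f^[n] ⁻¹' {y} := fun x => ⟨f^[m] x, by
    rw [mem_preimage, ← Function.iterate_add_apply, add_comm]; exact x.2.1⟩
  have hφ : Function.Injective φ := fun a b hab =>
    Subtype.ext (hinj a.2.2 b.2.2 (congrArg Subtype.val hab))
  calc ∑' x : ↥(f^[m + n] ⁻¹' {y} ∩ U), ENNReal.ofReal (orbDeriv f Df (m + n) x ^ (-s))
      ≤ ∑' x, w * ENNReal.ofReal (orbDeriv f Df n (φ x) ^ (-s)) := by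
        refine ENNReal.tsum_le_tsum fun x => ?_
        have hm := (orbDeriv_pos (f := f) hpos m x).le
        rw [orbDeriv_add, Real.mul_rpow hm (orbDeriv_pos hpos n _).le,
          ENNReal.ofReal_mul (Real.rpow_nonneg hm _)]
        exact mul_le_mul_left (hw x x.2.2) _
    _ = w * ∑' x, ENNReal.ofReal (orbDeriv f Df n (φ x) ^ (-s)) := ENNReal.tsum_mul_left
    _ ≤ w * fiberSum f Df s n y := mul_le_mul_right (ENNReal.tsum_comp_le_tsum_of_injective hφ
        fun x : f^[n] ⁻¹' {y} => ENNReal.ofReal (orbDeriv f Df n x ^ (-s))) _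

lemma partitionSum_le_sum_mul_partitionSum (hpos : ∀ x, 0 < Df x) {ι : Type*} {T : Finset ι}
    {U : ι → Set X} {τ : ι → ℕ} {w : ι → ℝ≥0∞} {s : ℝ} {n : ℕ}
    (hcover : ∀ x, ∃ i ∈ T, x ∈ U i) (hinj : ∀ i ∈ T, InjOn f^[τ i] (U i))
    (hw : ∀ i ∈ T, ∀ u ∈ U i, ENNReal.ofReal (orbDeriv f Df (τ i) u ^ (-s)) ≤ w i)
    (hτ : ∀ i ∈ T, τ i ≤ n) :
    partitionSum f Df s n ≤ ∑ i ∈ T, w i * partitionSum f Df s (n - τ i) := by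
  refine iSup_le fun y => ?_
  have hfiber : f^[n] ⁻¹' {y} ⊆ ⋃ i ∈ T, f^[n] ⁻¹' {y} ∩ U i := fun x hx => by
    obtain ⟨i, hi, hxi⟩ := hcover x
    exact mem_biUnion hi ⟨hx, hxi⟩
  calc fiberSum f Df s n y
      ≤ ∑' x : ⋃ i ∈ T, f^[n] ⁻¹' {y} ∩ U i, ENNReal.ofReal (orbDeriv f Df n x ^ (-s)) :=
        ENNReal.tsum_mono_subtype (fun x => ENNReal.ofReal (orbDeriv f Df n x ^ (-s))) hfiber
    _ ≤ ∑ i ∈ T, ∑' x : ↥(f^[n] ⁻¹' {y} ∩ U i), ENNReal.ofReal (orbDeriv f Df n x ^ (-s)) :=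
        ENNReal.tsum_biUnion_le (fun x => ENNReal.ofReal (orbDeriv f Df n x ^ (-s))) T _
    _ ≤ ∑ i ∈ T, w i * partitionSum f Df s (n - τ i) := by
        refine Finset.sum_le_sum fun i hi => ?_
        obtain ⟨k, rfl⟩ := Nat.exists_eq_add_of_le (hτ i hi)
        rw [add_tsub_cancel_left]
        exact (tsum_fiber_inter_le_mul_fiberSum hpos (hinj i hi) (hw i hi) k y).trans
          (mul_le_mul_right (fiberSum_le_partitionSum s k y) _)

lemma partitionSum_le_ofReal_exp_mul (hpos : ∀ x, 0 < Df x) {s t c : ℝ} {n : ℕ}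
    (h : ∀ x, (t - s) * Real.log (orbDeriv f Df n x) ≤ c) :
    partitionSum f Df s n ≤ ENNReal.ofReal (Real.exp c) * partitionSum f Df t n := by
  have hterm : ∀ x, orbDeriv f Df n x ^ (-s) ≤ Real.exp c * orbDeriv f Df n x ^ (-t) := by
    intro x
    have hD := orbDeriv_pos (f := f) hpos n x
    rw [Real.rpow_def_of_pos hD, Real.rpow_def_of_pos hD, ← Real.exp_add, Real.exp_le_exp]
    linarith [h x]
  refine iSup_le fun y => ?_
  calc fiberSum f Df s n y
      ≤ ∑' x : f^[n] ⁻¹' {y},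
          ENNReal.ofReal (Real.exp c) * ENNReal.ofReal (orbDeriv f Df n x ^ (-t)) :=
        ENNReal.tsum_le_tsum fun x => by
          rw [← ENNReal.ofReal_mul (Real.exp_nonneg c)]
          exact ENNReal.ofReal_le_ofReal (hterm x)
    _ = ENNReal.ofReal (Real.exp c) * fiberSum f Df t n y := ENNReal.tsum_mul_left
    _ ≤ ENNReal.ofReal (Real.exp c) * partitionSum f Df t n :=
        mul_le_mul_right (fiberSum_le_partitionSum t n y) _

lemma one_le_partitionSum_zero [Nonempty X] (n : ℕ) : 1 ≤ partitionSum f Df 0 n := by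
  obtain ⟨x⟩ := ‹Nonempty X›
  refine le_trans ?_ (fiberSum_le_partitionSum 0 n (f^[n] x))
  calc (1 : ℝ≥0∞) = ENNReal.ofReal (orbDeriv f Df n x ^ (-(0 : ℝ))) := by simp
    _ ≤ fiberSum f Df 0 n (f^[n] x) :=
        ENNReal.le_tsum (f := fun u : f^[n] ⁻¹' {f^[n] x} =>
          ENNReal.ofReal (orbDeriv f Df n u ^ (-(0 : ℝ)))) ⟨x, rfl⟩

section Compact

variable [CompactSpace X] [PerfectSpace X] (hconf : IsConfDeriv f Df) (hpos : ∀ x, 0 < Df x)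
include hconf hpos

lemma exists_partitionSum_zero_le_pow : ∃ p : ℕ, ∀ n, partitionSum f Df 0 n ≤ p ^ n := by
  obtain ⟨ρ, hd⟩ := hconf.exists_isDistortionBound hpos one_lt_two
  obtain ⟨T, -, hT, hcover⟩ := finite_cover_balls_of_compact (isCompact_univ (X := X)) hd.radius_pos
  lift T to Finset X using hT
  have hstep : ∀ n, partitionSum f Df 0 (n + 1) ≤ T.card * partitionSum f Df 0 n := fun n => by
    refine (partitionSum_le_sum_mul_partitionSum (T := T) (U := bowenBall f 1 ρ) (τ := fun _ => 1)
      (w := fun _ => 1) hpos (fun x => ?_) (fun c _ => hd.injOn_iterate_bowenBall 1 c)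
      (fun _ _ _ _ => by simp) fun _ _ => Nat.le_add_left 1 n).trans_eq (by simp)
    obtain ⟨c, hc, hxc⟩ := mem_iUnion₂.1 (hcover (mem_univ x))
    exact ⟨c, hc, fun k hk => by rwa [Nat.lt_one_iff.1 hk]⟩
  refine ⟨T.card, fun n => ?_⟩
  induction n with
  | zero =>
    refine iSup_le fun y => ?_
    simp [fiberSum, orbDeriv_zero]
  | succ n ih =>
    rw [pow_succ']
    exact (hstep n).trans (mul_le_mul_right ih _)

lemma exists_sub_mul_log_orbDeriv_le :
    ∃ B, ∀ (s t : ℝ) (n : ℕ) (x : X),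
      (t - s) * Real.log (orbDeriv f Df n x) ≤ n * (|s - t| * B) := by
  obtain ⟨B, hB⟩ := hconf.exists_abs_log_deriv_le hpos
  refine ⟨B, fun s t n x => (le_abs_self _).trans ?_⟩
  rw [abs_mul, abs_sub_comm, mul_left_comm]
  exact mul_le_mul_of_nonneg_left (abs_log_orbDeriv_le hpos hB n x) (abs_nonneg _)

lemma partitionSum_ne_top (s : ℝ) (n : ℕ) : partitionSum f Df s n ≠ ⊤ := by
  obtain ⟨p, hp⟩ := exists_partitionSum_zero_le_pow hconf hpos
  obtain ⟨B, hB⟩ := exists_sub_mul_log_orbDeriv_le hconf hpos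
  exact ne_top_of_le_ne_top
    (ENNReal.mul_ne_top ENNReal.ofReal_ne_top
      (ne_top_of_le_ne_top (ENNReal.pow_ne_top (ENNReal.natCast_ne_top p)) (hp n)))
    (partitionSum_le_ofReal_exp_mul hpos (hB s 0 n))

lemma pressure_eq_liminf (s : ℝ) :
    pressure f Df s = liminf (fun n : ℕ => (n : ℝ)⁻¹ * logPartitionSum f Df s n) atTop := by
  have hsum : ∀ n, (partitionSum f Df s n).toReal =
      ⨆ y, ∑' x : f^[n] ⁻¹' {y}, orbDeriv f Df n x ^ (-s) := by
    intro n
    rw [partitionSum, ENNReal.toReal_iSup fun y =>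
      ne_top_of_le_ne_top (partitionSum_ne_top hconf hpos s n) (fiberSum_le_partitionSum s n y)]
    refine iSup_congr fun y => (ENNReal.tsum_toReal_eq fun _ => ENNReal.ofReal_ne_top).trans
      (tsum_congr fun x => ENNReal.toReal_ofReal ?_)
    exact Real.rpow_nonneg (orbDeriv_pos hpos n x).le _
  simp only [logPartitionSum, hsum, pressure]

variable [Nonempty X]

lemma toReal_partitionSum_pos (s : ℝ) (n : ℕ) : 0 < (partitionSum f Df s n).toReal := by
  obtain ⟨B, hB⟩ := exists_sub_mul_log_orbDeriv_le hconf hpos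
  refine ENNReal.toReal_pos (fun h => ?_) (partitionSum_ne_top hconf hpos s n)
  have hle := (one_le_partitionSum_zero n).trans (partitionSum_le_ofReal_exp_mul hpos (hB 0 s n))
  rw [h, mul_zero] at hle
  exact one_ne_zero (le_zero_iff.1 hle)

lemma logPartitionSum_le_add {s t c : ℝ} {n : ℕ}
    (h : ∀ x, (t - s) * Real.log (orbDeriv f Df n x) ≤ c) :
    logPartitionSum f Df s n ≤ logPartitionSum f Df t n + c := by
  have ht := toReal_partitionSum_pos hconf hpos t n
  have hle := ENNReal.toReal_mono
    (ENNReal.mul_ne_top ENNReal.ofReal_ne_top (partitionSum_ne_top hconf hpos t n))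
    (partitionSum_le_ofReal_exp_mul hpos h)
  rw [ENNReal.toReal_mul, ENNReal.toReal_ofReal (Real.exp_nonneg c)] at hle
  calc logPartitionSum f Df s n
      ≤ Real.log (Real.exp c * (partitionSum f Df t n).toReal) :=
        Real.log_le_log (toReal_partitionSum_pos hconf hpos s n) hle
    _ = logPartitionSum f Df t n + c := by
        rw [Real.log_mul (Real.exp_pos c).ne' ht.ne', Real.log_exp, add_comm, logPartitionSum]

lemma logPartitionSum_zero_nonneg (n : ℕ) : 0 ≤ logPartitionSum f Df 0 n := by
  refine Real.log_nonneg ?_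
  rw [← ENNReal.toReal_one]
  exact ENNReal.toReal_mono (partitionSum_ne_top hconf hpos 0 n) (one_le_partitionSum_zero n)

lemma exists_logPartitionSum_zero_le_mul : ∃ b : ℝ, ∀ n : ℕ, logPartitionSum f Df 0 n ≤ n * b := by
  obtain ⟨p, hp⟩ := exists_partitionSum_zero_le_pow hconf hpos
  refine ⟨Real.log p, fun n => ?_⟩
  have hle := ENNReal.toReal_mono (ENNReal.pow_ne_top (ENNReal.natCast_ne_top p)) (hp n)
  rw [ENNReal.toReal_pow, ENNReal.toReal_natCast] at hle
  rw [← Real.log_pow]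
  exact Real.log_le_log (toReal_partitionSum_pos hconf hpos 0 n) hle

lemma exists_abs_inv_mul_logPartitionSum_le (s : ℝ) :
    ∃ b, ∀ n : ℕ, |(n : ℝ)⁻¹ * logPartitionSum f Df s n| ≤ b := by
  obtain ⟨b, hb⟩ := exists_logPartitionSum_zero_le_mul hconf hpos
  obtain ⟨B, hB⟩ := exists_sub_mul_log_orbDeriv_le hconf hpos
  have habs : ∀ n : ℕ, |logPartitionSum f Df s n| ≤ n * |b + |s| * B| := by
    intro n
    have hup := logPartitionSum_le_add hconf hpos (hB s 0 n)
    have hlow := logPartitionSum_le_add hconf hpos (hB 0 s n)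
    rw [sub_zero] at hup
    rw [zero_sub, abs_neg] at hlow
    calc |logPartitionSum f Df s n| ≤ n * b + n * (|s| * B) :=
          abs_le.2 ⟨by linarith [logPartitionSum_zero_nonneg hconf hpos n, hb n],
            by linarith [hb n]⟩
      _ = n * (b + |s| * B) := by ring
      _ ≤ n * |b + |s| * B| := mul_le_mul_of_nonneg_left (le_abs_self _) n.cast_nonneg
  refine ⟨|b + |s| * B|, fun n => ?_⟩
  rw [abs_mul, abs_inv, Nat.abs_cast]
  exact inv_mul_le_of_le_mul₀ n.cast_nonneg (abs_nonneg _) (habs n)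

/-! ### The pressure -/

lemma pressure_le_pressure_add {s t c₀ : ℝ} {c : ℕ → ℝ}
    (h : ∀ n x, (t - s) * Real.log (orbDeriv f Df n x) ≤ c n)
    (hc : Tendsto (fun n : ℕ => (n : ℝ)⁻¹ * c n) atTop (𝓝 c₀)) :
    pressure f Df s ≤ pressure f Df t + c₀ := by
  obtain ⟨bs, hbs⟩ := exists_abs_inv_mul_logPartitionSum_le hconf hpos s
  obtain ⟨bt, hbt⟩ := exists_abs_inv_mul_logPartitionSum_le hconf hpos t
  have hbelow_s := isBoundedUnder_of (f := atTop) (r := (· ≥ ·))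
    ⟨-bs, fun n => (abs_le.1 (hbs n)).1⟩
  have hbelow_t := isBoundedUnder_of (f := atTop) (r := (· ≥ ·))
    ⟨-bt, fun n => (abs_le.1 (hbt n)).1⟩
  have habove_t := isBoundedUnder_of (f := atTop) (r := (· ≤ ·))
    ⟨bt, fun n => (abs_le.1 (hbt n)).2⟩
  rw [pressure_eq_liminf hconf hpos, pressure_eq_liminf hconf hpos, add_comm, ← hc.limsup_eq]
  refine le_trans (liminf_le_liminf (.of_forall fun n => ?_) hbelow_s ?_) (liminf_add_le
    hc.isBoundedUnder_ge hc.isBoundedUnder_le hbelow_t habove_t.isCoboundedUnder_ge)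
  · rw [Pi.add_apply, ← mul_add, add_comm]
    exact mul_le_mul_of_nonneg_left (logPartitionSum_le_add hconf hpos (h n))
      (inv_nonneg.2 n.cast_nonneg)
  · exact (isBoundedUnder_le_add hc.isBoundedUnder_le habove_t).isCoboundedUnder_ge

lemma continuous_pressure : Continuous (pressure f Df) := by
  obtain ⟨B, hB⟩ := exists_sub_mul_log_orbDeriv_le hconf hpos
  refine (LipschitzWith.of_le_add_mul B.toNNReal fun s t => ?_).continuous
  have hlim : Tendsto (fun n : ℕ => (n : ℝ)⁻¹ * (n * (|s - t| * B))) atTop (𝓝 (|s - t| * B)) :=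
    tendsto_const_nhds.congr' ((eventually_ne_atTop 0).mono fun n hn =>
      (inv_mul_cancel_left₀ (Nat.cast_ne_zero.2 hn) _).symm)
  calc pressure f Df s ≤ pressure f Df t + |s - t| * B :=
        pressure_le_pressure_add hconf hpos (hB s t) hlim
    _ ≤ pressure f Df t + B.toNNReal * dist s t := by
        rw [mul_comm, Real.dist_eq]
        gcongr
        exact Real.le_coe_toNNReal B

lemma pressure_zero_nonneg : 0 ≤ pressure f Df 0 := by
  obtain ⟨b, hb⟩ := exists_abs_inv_mul_logPartitionSum_le hconf hpos 0
  rw [pressure_eq_liminf hconf hpos]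
  have hbdd : IsBoundedUnder (· ≤ ·) atTop fun n : ℕ => (n : ℝ)⁻¹ * logPartitionSum f Df 0 n :=
    isBoundedUnder_of ⟨b, fun n => (abs_le.1 (hb n)).2⟩
  exact le_liminf_of_le hbdd.isCoboundedUnder_ge
    (.of_forall fun n => mul_nonneg (inv_nonneg.2 n.cast_nonneg)
      (logPartitionSum_zero_nonneg hconf hpos n))

end Compact

lemma exists_pressure_le_sub_mul [CompactSpace X] [PerfectSpace X] [Nonempty X]
    (hconf : IsConfDeriv f Df) (hexp : UnifExpanding f Df) :
    ∃ a > 0, ∀ s t, s ≤ t → pressure f Df t ≤ pressure f Df s - (t - s) * a := by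
  have hpos := hexp.deriv_pos
  obtain ⟨C, hC, β, hβ, hexp⟩ := hexp
  refine ⟨Real.log β, Real.log_pos hβ, fun s t hst => ?_⟩
  have hlog : ∀ (n : ℕ) (x : X),
      (s - t) * Real.log (orbDeriv f Df n x) ≤ (s - t) * (Real.log C + n * Real.log β) := by
    intro n x
    rw [← Real.log_pow, ← Real.log_mul hC.ne' (by positivity)]
    exact mul_le_mul_of_nonpos_left (Real.log_le_log (by positivity) (hexp x n)) (by linarith)
  have hlim : Tendsto (fun n : ℕ => (n : ℝ)⁻¹ * ((s - t) * (Real.log C + n * Real.log β))) atTop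
      (𝓝 ((s - t) * Real.log β)) := by
    have hinv : Tendsto (fun n : ℕ => (s - t) * (Real.log C * (n : ℝ)⁻¹ + Real.log β)) atTop
        (𝓝 ((s - t) * (Real.log C * 0 + Real.log β))) :=
      ((tendsto_inv_atTop_nhds_zero_nat.const_mul _).add_const _).const_mul _
    rw [mul_zero, zero_add] at hinv
    refine hinv.congr' ((eventually_ne_atTop 0).mono fun n hn => ?_)
    field_simp
  linarith [pressure_le_pressure_add hconf hpos hlog hlim]

lemma strictAnti_pressure [CompactSpace X] [PerfectSpace X] [Nonempty X]
    (hconf : IsConfDeriv f Df) (hexp : UnifExpanding f Df) : StrictAnti (pressure f Df) := by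
  obtain ⟨a, ha, hle⟩ := exists_pressure_le_sub_mul hconf hexp
  intro s t hst
  linarith [hle s t hst.le, mul_pos (sub_pos.2 hst) ha]

lemma exists_pressure_eq_zero [CompactSpace X] [PerfectSpace X] [Nonempty X]
    (hconf : IsConfDeriv f Df) (hexp : UnifExpanding f Df) : ∃ s ≥ 0, pressure f Df s = 0 := by
  obtain ⟨a, ha, hle⟩ := exists_pressure_le_sub_mul hconf hexp
  have hzero := pressure_zero_nonneg hconf hexp.deriv_pos
  have hT : 0 ≤ pressure f Df 0 / a := by positivity
  have hPT : pressure f Df (pressure f Df 0 / a) ≤ 0 := by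
    have := hle 0 _ hT
    rwa [sub_zero, div_mul_cancel₀ _ ha.ne', sub_self] at this
  obtain ⟨s, hs, hPs⟩ := intermediate_value_Icc' hT
    (continuous_pressure hconf hexp.deriv_pos).continuousOn ⟨hPT, hzero⟩
  exact ⟨s, hs.1, hPs⟩

/-! ### Renewal inequalities -/

-- Each application of the recursion at least doubles the scale, so that it reaches `[1, R]`
-- after finitely many steps.
lemma le_mul_rpow_neg_of_le_sum {ι : Type*} {I : Finset ι} {N : ℝ → ℝ} {l : ι → ℝ} {s A R : ℝ}
    (hA : 0 ≤ A) (hR : 0 < R) (hl : ∀ i ∈ I, R⁻¹ ≤ l i ∧ l i ≤ 1 / 2)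
    (hsum : ∑ i ∈ I, l i ^ s ≤ 1) (hbase : ∀ δ ∈ Icc 1 R, N δ ≤ A * δ ^ (-s))
    (hrec : ∀ δ ∈ Ioo 0 1, N δ ≤ ∑ i ∈ I, N (δ / l i)) {δ : ℝ} (hδ : δ ∈ Ioc 0 R) :
    N δ ≤ A * δ ^ (-s) := by
  obtain ⟨m, hm⟩ := exists_pow_lt_of_lt_one hδ.1 (one_half_lt_one (α := ℝ))
  induction m generalizing δ with
  | zero => exact hbase δ ⟨by simpa using hm.le, hδ.2⟩
  | succ m ih =>
    obtain hδ₁ | hδ₁ := le_or_gt 1 δ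
    · exact hbase δ ⟨hδ₁, hδ.2⟩
    have hterm : ∀ i ∈ I, N (δ / l i) ≤ A * δ ^ (-s) * l i ^ s := by
      intro i hi
      obtain ⟨hRl, hl_half⟩ := hl i hi
      have hl₀ : 0 < l i := (inv_pos.2 hR).trans_le hRl
      have hδR : δ / l i ≤ R :=
        calc δ / l i ≤ 1 / l i := by gcongr
          _ ≤ R := by rw [one_div]; exact inv_le_of_inv_le₀ hR hRl
      have hpow : (1 / 2) ^ m < δ / l i := by
        rw [lt_div_iff₀ hl₀]
        calc (1 / 2 : ℝ) ^ m * l i ≤ (1 / 2) ^ m * (1 / 2) := by gcongr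
          _ < δ := by rwa [← pow_succ]
      refine (ih ⟨div_pos hδ.1 hl₀, hδR⟩ hpow).trans_eq ?_
      rw [Real.div_rpow hδ.1.le hl₀.le, Real.rpow_neg hl₀.le, div_inv_eq_mul, mul_assoc]
    have hδs : 0 ≤ A * δ ^ (-s) := mul_nonneg hA (Real.rpow_nonneg hδ.1.le _)
    calc N δ ≤ ∑ i ∈ I, N (δ / l i) := hrec δ ⟨hδ.1, hδ₁⟩
      _ ≤ ∑ i ∈ I, A * δ ^ (-s) * l i ^ s := Finset.sum_le_sum hterm
      _ = A * δ ^ (-s) * ∑ i ∈ I, l i ^ s := (Finset.mul_sum _ _ _).symm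
      _ ≤ A * δ ^ (-s) := mul_le_of_le_one_right hδs hsum

lemma exists_forall_le_of_le_sum_mul {ι : Type*} {T : Finset ι} {u : ℕ → ℝ≥0∞} {τ : ι → ℕ}
    {w : ι → ℝ≥0∞} (hu : ∀ n, u n ≠ ⊤) (hτ : ∀ i ∈ T, 0 < τ i) (hw : ∑ i ∈ T, w i ≤ 1)
    (hrec : ∀ n, (∀ i ∈ T, τ i ≤ n) → u n ≤ ∑ i ∈ T, w i * u (n - τ i)) :
    ∃ M ≠ ⊤, ∀ n, u n ≤ M := by
  let m := T.sup τ
  let M := ∑ n ∈ Finset.range m, u n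
  refine ⟨M, ENNReal.sum_ne_top.2 fun n _ => hu n, fun n => ?_⟩
  induction n using Nat.strong_induction_on with
  | _ n ih =>
    obtain hn | hn := lt_or_ge n m
    · exact Finset.single_le_sum (fun _ _ => zero_le) (Finset.mem_range.2 hn)
    have hτn : ∀ i ∈ T, τ i ≤ n := fun i hi => (Finset.le_sup hi).trans hn
    calc u n ≤ ∑ i ∈ T, w i * u (n - τ i) := hrec n hτn
      _ ≤ ∑ i ∈ T, w i * M := Finset.sum_le_sum fun i hi => mul_le_mul_right
          (ih _ (Nat.sub_lt_self (hτ i hi) (hτn i hi))) _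
      _ = (∑ i ∈ T, w i) * M := (Finset.sum_mul _ _ _).symm
      _ ≤ M := (mul_le_mul_left hw M).trans_eq (one_mul M)

/-! ### Covering numbers and box dimensions -/

lemma coverNum_le_card {δ : ℝ} {t : Finset X} (ht : ∀ x, ∃ c ∈ t, dist x c < δ) :
    coverNum X δ ≤ t.card := Nat.sInf_le ⟨t, rfl, ht⟩

section Compact

variable [CompactSpace X]

lemma exists_finset_card_eq_coverNum {δ : ℝ} (hδ : 0 < δ) :
    ∃ t : Finset X, t.card = coverNum X δ ∧ ∀ x, ∃ c ∈ t, dist x c < δ := by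
  refine Nat.sInf_mem (s := {n | ∃ t : Finset X, t.card = n ∧ ∀ x, ∃ c ∈ t, dist x c < δ}) ?_
  obtain ⟨t, -, ht, hcover⟩ := finite_cover_balls_of_compact (isCompact_univ (X := X)) hδ
  lift t to Finset X using ht
  exact ⟨t.card, t, rfl, fun x => by simpa using hcover (mem_univ x)⟩

lemma coverNum_anti {δ ε : ℝ} (hδ : 0 < δ) (hδε : δ ≤ ε) : coverNum X ε ≤ coverNum X δ := by
  obtain ⟨t, ht_card, ht⟩ := exists_finset_card_eq_coverNum (X := X) hδ
  rw [← ht_card]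
  exact coverNum_le_card fun x => (ht x).imp fun c hc => ⟨hc.1, hc.2.trans_le hδε⟩

lemma coverNum_pos [Nonempty X] {δ : ℝ} (hδ : 0 < δ) : 0 < coverNum X δ := by
  obtain ⟨t, ht_card, ht⟩ := exists_finset_card_eq_coverNum (X := X) hδ
  obtain ⟨c, hc, -⟩ := ht (Classical.arbitrary X)
  exact ht_card ▸ Finset.card_pos.2 ⟨c, hc⟩

lemma exists_finset_card_le_coverNum {Y : Type*} [MetricSpace Y] {U : Set Y} {F : Y → X}
    {L ε : ℝ} (hL : 0 < L) (hε : 0 < ε)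
    (hF : ∀ u ∈ U, ∀ v ∈ U, dist u v ≤ L * dist (F u) (F v)) :
    ∃ t : Finset Y, t.card ≤ coverNum X ε ∧ ∀ x ∈ U, ∃ c ∈ t, dist x c < 2 * L * ε := by
  obtain rfl | ⟨u₀, -⟩ := U.eq_empty_or_nonempty
  · exact ⟨∅, by simp⟩
  have : Nonempty Y := ⟨u₀⟩
  obtain ⟨t, ht_card, ht⟩ := exists_finset_card_eq_coverNum (X := X) hε
  have hpick : ∀ c, (∃ w ∈ U, dist (F w) c < ε) → ∃ w ∈ U, dist (F w) c < ε := fun _ => id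
  choose! u hu_mem hu_dist using hpick
  refine ⟨t.image u, Finset.card_image_le.trans ht_card.le, fun x hx => ?_⟩
  obtain ⟨c, hc, hxc⟩ := ht (F x)
  refine ⟨u c, Finset.mem_image_of_mem u hc, ?_⟩
  have huc : dist (F (u c)) c < ε := hu_dist c ⟨x, hx, hxc⟩
  calc dist x (u c) ≤ L * dist (F x) (F (u c)) := hF x hx _ (hu_mem c ⟨x, hx, hxc⟩)
    _ < L * (ε + ε) := by
        gcongr
        exact (dist_triangle_right _ _ c).trans_lt (add_lt_add hxc huc)
    _ = 2 * L * ε := by ring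

lemma coverNum_le_sum_coverNum {Y ι : Type*} [MetricSpace Y] {I : Finset ι} {U : ι → Set Y}
    {F : Y → X} {L : ι → ℝ} {δ : ℝ} (hδ : 0 < δ) (hL : ∀ i, 0 < L i)
    (hcover : ∀ x, ∃ i ∈ I, x ∈ U i)
    (hF : ∀ i, ∀ u ∈ U i, ∀ v ∈ U i, dist u v ≤ L i * dist (F u) (F v)) :
    coverNum Y δ ≤ ∑ i ∈ I, coverNum X (δ / (2 * L i)) := by
  have hscale : ∀ i, 0 < 2 * L i := fun i => mul_pos two_pos (hL i)
  choose t ht_card ht using fun i =>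
    exists_finset_card_le_coverNum (hL i) (div_pos hδ (hscale i)) (hF i)
  calc coverNum Y δ ≤ (I.biUnion t).card := coverNum_le_card fun x => by
        obtain ⟨i, hi, hxi⟩ := hcover x
        obtain ⟨c, hc, hxc⟩ := ht i x hxi
        rw [mul_div_cancel₀ _ (hscale i).ne'] at hxc
        exact ⟨c, Finset.mem_biUnion.2 ⟨i, hi, hc⟩, hxc⟩
    _ ≤ ∑ i ∈ I, (t i).card := Finset.card_biUnion_le
    _ ≤ ∑ i ∈ I, coverNum X (δ / (2 * L i)) := Finset.sum_le_sum fun i _ => ht_card i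

lemma exists_coverNum_le_mul_rpow_neg [Nonempty X] {ι : Type*} {I : Finset ι} {l : ι → ℝ} {s : ℝ}
    (hs : 0 ≤ s) (hl : ∀ i, 0 < l i) (hl_half : ∀ i ∈ I, l i ≤ 1 / 2)
    (hsum : ∑ i ∈ I, l i ^ s ≤ 1)
    (hrec : ∀ δ > 0, coverNum X δ ≤ ∑ i ∈ I, coverNum X (δ / l i)) :
    ∃ A > 0, ∀ δ ∈ Ioo 0 1, (coverNum X δ : ℝ) ≤ A * δ ^ (-s) := by
  obtain ⟨R, hR₁, hR⟩ : ∃ R ≥ 1, ∀ i ∈ I, (l i)⁻¹ ≤ R := by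
    obtain ⟨R, hR⟩ := (I.image fun i => (l i)⁻¹).bddAbove
    exact ⟨max 1 R, le_max_left _ _, fun i hi =>
      (hR (Finset.mem_coe.2 (Finset.mem_image_of_mem _ hi))).trans (le_max_right _ _)⟩
  have hR₀ : 0 < R := one_pos.trans_le hR₁
  have hN₁ : 0 < (coverNum X 1 : ℝ) := Nat.cast_pos.2 (coverNum_pos one_pos)
  refine ⟨coverNum X 1 * R ^ s, by positivity, fun δ hδ => le_mul_rpow_neg_of_le_sum
    (N := fun δ => (coverNum X δ : ℝ)) (R := R) (l := l) (by positivity) hR₀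
    (fun i hi => ⟨inv_le_of_inv_le₀ (hl i) (hR i hi), hl_half i hi⟩) hsum (fun δ hδ => ?_)
    (fun δ hδ => by exact_mod_cast hrec δ hδ.1) ⟨hδ.1, hδ.2.le.trans hR₁⟩⟩
  have hδ₀ : 0 < δ := one_pos.trans_le hδ.1
  calc (coverNum X δ : ℝ) ≤ coverNum X 1 := by exact_mod_cast coverNum_anti one_pos hδ.1
    _ ≤ coverNum X 1 * (R / δ) ^ s :=
        le_mul_of_one_le_right hN₁.le (Real.one_le_rpow ((one_le_div hδ₀).2 hδ.2) hs)
    _ = coverNum X 1 * R ^ s * δ ^ (-s) := by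
        rw [Real.div_rpow hR₀.le hδ₀.le, Real.rpow_neg hδ₀.le, div_eq_mul_inv, mul_assoc]

lemma upperBoxDim_le_of_coverNum_le [Nonempty X] {s A : ℝ} (hA : 0 < A)
    (h : ∀ δ ∈ Ioo 0 1, (coverNum X δ : ℝ) ≤ A * δ ^ (-s)) : upperBoxDim X ≤ ENNReal.ofReal s := by
  have hlim : Tendsto (fun δ : ℝ => Real.log A / -Real.log δ + s) (𝓝[>] 0) (𝓝 s) := by
    simpa using ((tendsto_neg_atBot_atTop.comp Real.tendsto_log_nhdsGT_zero).const_div_atTop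
      (Real.log A)).add_const s
  rw [← (ENNReal.tendsto_ofReal hlim).limsup_eq]
  refine limsup_le_limsup ?_
  filter_upwards [Ioo_mem_nhdsGT (zero_lt_one (α := ℝ))] with δ hδ
  have hlogδ : 0 < -Real.log δ := neg_pos.2 (Real.log_neg hδ.1 hδ.2)
  have hlogN := Real.log_le_log (Nat.cast_pos.2 (coverNum_pos (X := X) hδ.1)) (h δ hδ)
  rw [Real.log_mul hA.ne' (Real.rpow_pos_of_pos hδ.1 _).ne', Real.log_rpow hδ.1] at hlogN
  refine ENNReal.ofReal_le_ofReal ?_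
  rw [div_add' _ _ _ hlogδ.ne', div_le_div_iff_of_pos_right hlogδ]
  linarith

end Compact

lemma frequently_coverNum_le_rpow_neg_of_lowerBoxDim_lt {a : NNReal} (ha : lowerBoxDim X < a) :
    ∃ᶠ δ : ℝ in 𝓝[>] 0, (coverNum X δ : ℝ) ≤ δ ^ (-(a : ℝ)) := by
  have hfreq := frequently_lt_of_liminf_lt (by isBoundedDefault) ha
  refine (hfreq.and_eventually (Ioo_mem_nhdsGT (zero_lt_one (α := ℝ)))).mono ?_
  rintro δ ⟨hlt, hδ₀, hδ₁⟩
  have hlogδ : 0 < -Real.log δ := neg_pos.2 (Real.log_neg hδ₀ hδ₁)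
  rw [← ENNReal.ofReal_coe_nnreal, ENNReal.ofReal_lt_ofReal_iff', div_lt_iff₀ hlogδ] at hlt
  rw [Real.rpow_def_of_pos hδ₀]
  exact (Real.le_exp_log _).trans (Real.exp_le_exp.2 (by linarith [hlt.1]))

lemma ediam_ball_le_ofReal (x : X) (r : ℝ) : ediam (ball x r) ≤ ENNReal.ofReal (2 * r) := by
  refine ediam_le fun u hu v hv => ?_
  rw [edist_dist]
  refine ENNReal.ofReal_le_ofReal ?_
  linarith [dist_triangle_right u v x, mem_ball.1 hu, mem_ball.1 hv]

lemma hausdorffMeasure_univ_ne_top_of_frequently [CompactSpace X] [MeasurableSpace X]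
    [BorelSpace X] {a : ℝ} (ha : 0 ≤ a)
    (h : ∃ᶠ δ : ℝ in 𝓝[>] 0, (coverNum X δ : ℝ) ≤ δ ^ (-a)) : μH[a] (univ : Set X) ≠ ⊤ := by
  choose! T hT_card hT using fun (δ : ℝ) (hδ : 0 < δ) => exists_finset_card_eq_coverNum (X := X) hδ
  have hdiam : Tendsto (fun δ : ℝ => ENNReal.ofReal (2 * δ)) (𝓝[>] 0) (𝓝 0) := by
    have hlim : Tendsto (fun δ : ℝ => 2 * δ) (𝓝 0) (𝓝 0) :=
      Continuous.tendsto' (by fun_prop) 0 0 (by simp)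
    simpa using (ENNReal.tendsto_ofReal hlim).mono_left nhdsWithin_le_nhds
  have hcover : ∀ᶠ δ : ℝ in 𝓝[>] 0, univ ⊆ ⋃ c : T δ, ball (c : X) δ := by
    filter_upwards [self_mem_nhdsWithin] with δ hδ x _
    obtain ⟨c, hc, hxc⟩ := hT δ hδ x
    exact mem_iUnion.2 ⟨⟨c, hc⟩, hxc⟩
  have hle := Measure.hausdorffMeasure_le_liminf_sum (ι := fun δ => T δ) a univ _ hdiam
    (fun δ c => ball (c : X) δ) (.of_forall fun δ c => ediam_ball_le_ofReal (c : X) δ) hcover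
  refine ne_top_of_le_ne_top (ENNReal.ofReal_ne_top (r := 2 ^ a)) (hle.trans ?_)
  refine liminf_le_of_frequently_le' ((h.and_eventually self_mem_nhdsWithin).mono ?_)
  rintro δ ⟨hN, hδ⟩
  have hδ₀ : 0 < δ := hδ
  calc ∑ c : T δ, ediam (ball (c : X) δ) ^ a
      ≤ ∑ _c : T δ, ENNReal.ofReal (2 * δ) ^ a :=
        Finset.sum_le_sum fun c _ => ENNReal.rpow_le_rpow (ediam_ball_le_ofReal (c : X) δ) ha
    _ = ENNReal.ofReal (coverNum X δ * (2 * δ) ^ a) := by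
        rw [ENNReal.ofReal_mul (Nat.cast_nonneg _), ENNReal.ofReal_rpow_of_pos (by positivity),
          ← hT_card δ hδ]
        simp
    _ ≤ ENNReal.ofReal (δ ^ (-a) * (2 * δ) ^ a) := by gcongr
    _ = ENNReal.ofReal (2 ^ a) := by
        rw [Real.mul_rpow two_pos.le hδ₀.le, mul_left_comm, ← Real.rpow_add hδ₀, neg_add_cancel,
          Real.rpow_zero, mul_one]

lemma dimH_univ_le_lowerBoxDim [CompactSpace X] : dimH (univ : Set X) ≤ lowerBoxDim X := by
  borelize X
  refine le_of_forall_gt fun d hd => ?_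
  obtain ⟨a, ha, had⟩ := ENNReal.lt_iff_exists_nnreal_btwn.1 hd
  exact (dimH_le_of_hausdorffMeasure_ne_top (hausdorffMeasure_univ_ne_top_of_frequently a.2
    (frequently_coverNum_le_rpow_neg_of_lowerBoxDim_lt ha))).trans_lt had

/-! ### The upper bound for the box dimension -/

lemma finite_preimage_iterate_singleton [CompactSpace X] [PerfectSpace X]
    (hconf : IsConfDeriv f Df) (hpos : ∀ x, 0 < Df x) (n : ℕ) (y : X) :
    (f^[n] ⁻¹' {y}).Finite := by
  have hsum : fiberSum f Df 0 n y ≠ ⊤ :=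
    ne_top_of_le_ne_top (partitionSum_ne_top hconf hpos 0 n) (fiberSum_le_partitionSum 0 n y)
  simp only [fiberSum, neg_zero, Real.rpow_zero, ENNReal.ofReal_one, ENNReal.tsum_set_one] at hsum
  exact encard_ne_top_iff.1 (by simpa using hsum)

lemma frequently_partitionSum_lt_of_pressure_lt [CompactSpace X] [PerfectSpace X] [Nonempty X]
    (hconf : IsConfDeriv f Df) (hpos : ∀ x, 0 < Df x) {s a : ℝ} (h : pressure f Df s < a) :
    ∃ᶠ n : ℕ in atTop, partitionSum f Df s n < ENNReal.ofReal (Real.exp a ^ n) := by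
  obtain ⟨b, hb⟩ := exists_abs_inv_mul_logPartitionSum_le hconf hpos s
  have hbdd := isBoundedUnder_of (f := atTop) (r := (· ≤ ·)) ⟨b, fun n => (abs_le.1 (hb n)).2⟩
  rw [pressure_eq_liminf hconf hpos] at h
  refine ((frequently_lt_of_liminf_lt hbdd.isCoboundedUnder_ge h).and_eventually
    (eventually_gt_atTop 0)).mono fun n ⟨hn, hn₀⟩ => ?_
  rw [inv_mul_lt_iff₀ (Nat.cast_pos.2 hn₀), logPartitionSum,
    Real.log_lt_iff_lt_exp (toReal_partitionSum_pos hconf hpos s n), Real.exp_nat_mul] at hn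
  exact (ENNReal.lt_ofReal_iff_toReal_lt (partitionSum_ne_top hconf hpos s n)).2 hn

-- The centers are the preimages under `fⁿ` of a finite net, and openness of `f` guarantees that
-- the Bowen balls around them cover the space.
lemma IsDistortionBound.exists_coverNum_le_sum [CompactSpace X] {θ ρ : ℝ}
    (hd : IsDistortionBound f Df θ ρ) (hopen : IsOpenMap f) (hcont : Continuous f)
    (hfin : ∀ n y, (f^[n] ⁻¹' {y}).Finite) {C : ℝ} (hC : 0 < C)
    (hexp : ∀ x n, C * θ ^ n ≤ orbDeriv f Df n x) :
    ∃ K : ℕ, ∀ n, ∃ I : Finset X,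
      (∀ δ > 0, coverNum X δ ≤ ∑ i ∈ I, coverNum X (δ / (2 * (θ ^ n / orbDeriv f Df n i)))) ∧
      ∀ s, ∑ i ∈ I, ENNReal.ofReal (orbDeriv f Df n i ^ (-s)) ≤ K * partitionSum f Df s n := by
  have hθ₀ : 0 < θ := zero_lt_one.trans hd.one_lt
  obtain ⟨r, hr, hshadow⟩ := hd.exists_forall_mem_bowenBall_of_mem_ball hopen hcont hC hexp
  obtain ⟨Y, -, hY, hnet⟩ := finite_cover_balls_of_compact (isCompact_univ (X := X)) hr
  lift Y to Finset X using hY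
  refine ⟨Y.card, fun n => ?_⟩
  have hD := orbDeriv_pos (f := f) hd.deriv_pos n
  have hfinite : (⋃ y ∈ Y, f^[n] ⁻¹' {y}).Finite := Y.finite_toSet.biUnion fun y _ => hfin n y
  refine ⟨hfinite.toFinset, fun δ hδ => ?_, fun s => ?_⟩
  · refine coverNum_le_sum_coverNum (U := bowenBall f n ρ) (F := f^[n]) hδ
      (fun i => div_pos (by positivity) (hD i)) (fun x => ?_) fun i u hu v hv => ?_
    · obtain ⟨y, hy, hxy⟩ := mem_iUnion₂.1 (hnet (mem_univ (f^[n] x)))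
      obtain ⟨x', hx', hx⟩ := hshadow n x y (mem_ball_comm.1 hxy)
      exact ⟨x', hfinite.mem_toFinset.2 (mem_biUnion hy hx'), hx⟩
    · rw [div_mul_eq_mul_div, le_div_iff₀' (hD i)]
      exact hd.orbDeriv_mul_dist_le hu hv
  · let w : X → ℝ≥0∞ := fun x => ENNReal.ofReal (orbDeriv f Df n x ^ (-s))
    calc ∑ i ∈ hfinite.toFinset, w i = ∑' x : ↥(⋃ y ∈ Y, f^[n] ⁻¹' {y}), w x := by
          rw [← Finset.tsum_subtype', hfinite.coe_toFinset]
      _ ≤ ∑ y ∈ Y, fiberSum f Df s n y := ENNReal.tsum_biUnion_le w Y _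
      _ ≤ ∑ _y ∈ Y, partitionSum f Df s n :=
          Finset.sum_le_sum fun y _ => fiberSum_le_partitionSum s n y
      _ = Y.card * partitionSum f Df s n := by rw [Finset.sum_const, nsmul_eq_mul]

lemma exists_one_lt_and_lt_and_rpow_lt {β b : ℝ} (hβ : 1 < β) (hb : 1 < b) (s : ℝ) :
    ∃ θ, 1 < θ ∧ θ < β ∧ θ ^ s < b := by
  have hcont : ContinuousAt (fun θ : ℝ => θ ^ s) 1 :=
    Real.continuousAt_rpow_const _ _ (.inl one_ne_zero)
  have hpow : ∀ᶠ θ : ℝ in 𝓝 1, θ ^ s < b :=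
    hcont.eventually_lt continuousAt_const (by simpa using hb)
  have hev : ∀ᶠ θ : ℝ in 𝓝[>] 1, θ < β ∧ θ ^ s < b :=
    ((eventually_lt_nhds hβ).and hpow).filter_mono nhdsWithin_le_nhds
  exact ((eventually_mem_nhdsWithin (s := Ioi 1)).and hev).exists

lemma eventually_const_mul_pow_le {c q ε : ℝ} (hq : 0 ≤ q) (hq₁ : q < 1) (hε : 0 < ε) :
    ∀ᶠ n : ℕ in atTop, c * q ^ n ≤ ε := by
  have hlim := (tendsto_pow_atTop_nhds_zero_of_lt_one hq hq₁).const_mul c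
  rw [mul_zero] at hlim
  exact hlim.eventually_le_const hε

lemma sum_two_mul_pow_div_orbDeriv_rpow_le (hpos : ∀ x, 0 < Df x) {θ s e : ℝ} (hθ : 0 < θ)
    (he : 0 ≤ e) {K n : ℕ} {I : Finset X}
    (hI : ∑ i ∈ I, ENNReal.ofReal (orbDeriv f Df n i ^ (-s)) ≤ K * partitionSum f Df s n)
    (hZ : partitionSum f Df s n ≤ ENNReal.ofReal (e ^ n)) :
    ∑ i ∈ I, (2 * (θ ^ n / orbDeriv f Df n i)) ^ s ≤ 2 ^ s * K * (θ ^ s * e) ^ n := by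
  have hsum : ∑ i ∈ I, orbDeriv f Df n i ^ (-s) ≤ K * e ^ n := by
    rw [← ENNReal.ofReal_le_ofReal_iff (by positivity),
      ENNReal.ofReal_sum_of_nonneg fun i _ => Real.rpow_nonneg (orbDeriv_pos hpos n i).le _,
      ENNReal.ofReal_mul K.cast_nonneg, ENNReal.ofReal_natCast]
    exact hI.trans (mul_le_mul_right hZ _)
  have hterm : ∀ i, (2 * (θ ^ n / orbDeriv f Df n i)) ^ s =
      2 ^ s * (θ ^ s) ^ n * orbDeriv f Df n i ^ (-s) := by
    intro i
    have hD := orbDeriv_pos (f := f) hpos n i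
    rw [Real.mul_rpow zero_le_two (by positivity), Real.div_rpow (by positivity) hD.le,
      Real.rpow_neg hD.le, Real.rpow_pow_comm hθ.le, div_eq_mul_inv, mul_assoc]
  calc ∑ i ∈ I, (2 * (θ ^ n / orbDeriv f Df n i)) ^ s
      = 2 ^ s * (θ ^ s) ^ n * ∑ i ∈ I, orbDeriv f Df n i ^ (-s) := by
        rw [Finset.mul_sum]; exact Finset.sum_congr rfl fun i _ => hterm i
    _ ≤ 2 ^ s * (θ ^ s) ^ n * (K * e ^ n) := by gcongr
    _ = 2 ^ s * K * (θ ^ s * e) ^ n := by rw [mul_pow]; ring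

-- A single time `n` at which the partition sum beats the distortion `θⁿ` makes the covering numbers
-- satisfy a renewal inequality with contractions `2θⁿ / Df⁽ⁿ⁾` of total `s`-weight at most `1`.
lemma upperBoxDim_le_of_pressure_neg [CompactSpace X] [PerfectSpace X] [Nonempty X]
    (hconf : IsConfDeriv f Df) (hexp : UnifExpanding f Df) (hopen : IsOpenMap f) {s : ℝ}
    (hs : 0 ≤ s) (hP : pressure f Df s < 0) : upperBoxDim X ≤ ENNReal.ofReal s := by
  have hpos := hexp.deriv_pos
  obtain ⟨C, hC, β, hβ, hexp⟩ := hexp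
  obtain ⟨a, hPa, ha⟩ := exists_between hP
  obtain ⟨θ, hθ, hθβ, hθs⟩ :=
    exists_one_lt_and_lt_and_rpow_lt hβ (Real.one_lt_exp_iff.2 (neg_pos.2 ha)) s
  have hθ₀ : 0 < θ := by linarith
  have hβ₀ : 0 < β := by linarith
  obtain ⟨ρ, hd⟩ := hconf.exists_isDistortionBound hpos hθ
  obtain ⟨K, hK⟩ := hd.exists_coverNum_le_sum hopen hconf.continuous
    (finite_preimage_iterate_singleton hconf hpos) hC
    fun x n => le_trans (by gcongr) (hexp x n)
  have hq : θ ^ s * Real.exp a < 1 := by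
    rwa [Real.exp_neg, ← one_div, lt_div_iff₀ (Real.exp_pos a)] at hθs
  obtain ⟨n, hZ, hweight, hcontr⟩ :=
    ((frequently_partitionSum_lt_of_pressure_lt hconf hpos hPa).and_eventually
      ((eventually_const_mul_pow_le (c := 2 ^ s * K) (by positivity) hq one_pos).and
        (eventually_const_mul_pow_le (c := 2 / C) (by positivity) ((div_lt_one hβ₀).2 hθβ)
          one_half_pos))).exists
  obtain ⟨I, hrec, hI⟩ := hK n
  have hD := orbDeriv_pos (f := f) hpos n
  have hhalf : ∀ i ∈ I, 2 * (θ ^ n / orbDeriv f Df n i) ≤ 1 / 2 := fun i _ =>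
    calc 2 * (θ ^ n / orbDeriv f Df n i) ≤ 2 * (θ ^ n / (C * β ^ n)) := by gcongr; exact hexp i n
      _ = 2 / C * (θ / β) ^ n := by rw [div_pow]; field_simp
      _ ≤ 1 / 2 := hcontr
  obtain ⟨A, hA, hcover⟩ := exists_coverNum_le_mul_rpow_neg hs
    (fun i => mul_pos two_pos (div_pos (pow_pos hθ₀ n) (hD i))) hhalf
    ((sum_two_mul_pow_div_orbDeriv_rpow_le hpos hθ₀ (Real.exp_nonneg a) (hI s) hZ.le).trans hweight)
    hrec
  exact upperBoxDim_le_of_coverNum_le hA hcover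

/-! ### The lower bound for the Hausdorff dimension -/

lemma exists_iUnion_eq_univ_tsum_ediam_rpow_lt {Y : Type*} [EMetricSpace Y] [MeasurableSpace Y]
    [BorelSpace Y] {s : ℝ} (hs : 0 < s) (h : μH[s] (univ : Set Y) = 0)
    {ε : ℝ≥0∞} (hε : 0 < ε) :
    ∃ t : ℕ → Set Y, ⋃ n, t n = univ ∧ ∑' n, ediam (t n) ^ s < ε := by
  rw [Measure.hausdorffMeasure_apply] at h
  have hinf := (iSup₂_eq_bot.1 h 1 one_pos).trans_lt hε
  simp only [iInf_lt_iff] at hinf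
  obtain ⟨t, hcover, -, hsum⟩ := hinf
  refine ⟨t, univ_subset_iff.1 hcover, lt_of_le_of_lt (ENNReal.tsum_le_tsum fun n => ?_) hsum⟩
  obtain hempty | hne := (t n).eq_empty_or_nonempty
  · simp [hempty, hs]
  · simp [hne]

lemma exists_ball_cover_sum_rpow_le [CompactSpace X] [Nonempty X] {s η : ℝ} (hs : 0 < s)
    (hη : 0 < η) {t : ℕ → Set X} (ht : ⋃ n, t n = univ)
    (hsum : ∑' n, ediam (t n) ^ s < ENNReal.ofReal η) :
    ∃ (T : Finset ℕ) (c : ℕ → X) (r : ℕ → ℝ), (∀ i, 0 < r i) ∧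
      (∀ x, ∃ i ∈ T, x ∈ ball (c i) (r i)) ∧ ∑ i ∈ T, r i ^ s ≤ η := by
  obtain ⟨ε, hε, hεsum⟩ := ENNReal.exists_pos_sum_of_countable (tsub_pos_of_lt hsum).ne' ℕ
  let q : ℕ → ℝ≥0∞ := fun n => ediam (t n) ^ s + ε n
  have hqsum : ∑' n, q n ≤ ENNReal.ofReal η := by
    rw [ENNReal.tsum_add]
    exact (add_le_add_right hεsum.le _).trans (add_tsub_cancel_of_le hsum.le).le
  have hq_top : ∀ n, q n ≠ ⊤ := fun n =>
    ne_top_of_le_ne_top ENNReal.ofReal_ne_top ((ENNReal.le_tsum n).trans hqsum)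
  have hlt_q : ∀ n, ediam (t n) ^ s < q n := fun n =>
    ENNReal.lt_add_right (ne_top_of_le_ne_top (hq_top n) le_self_add)
      (ENNReal.coe_ne_zero.2 (hε n).ne')
  have hq_pos : ∀ n, 0 < (q n).toReal := fun n =>
    ENNReal.toReal_pos (pos_of_gt (hlt_q n)).ne' (hq_top n)
  let r : ℕ → ℝ := fun n => (q n).toReal ^ s⁻¹
  have hr_pos : ∀ n, 0 < r n := fun n => Real.rpow_pos_of_pos (hq_pos n) _
  have hr_rpow : ∀ n, r n ^ s = (q n).toReal := fun n => Real.rpow_inv_rpow (hq_pos n).le hs.ne'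
  choose! c hc using fun (n : ℕ) (hn : (t n).Nonempty) => hn
  have hball : ∀ x, x ∈ ⋃ n, ball (c n) (r n) := by
    intro x
    obtain ⟨n, hxn⟩ := mem_iUnion.1 (ht.ge (mem_univ x))
    have hdist : ENNReal.ofReal (dist x (c n) ^ s) < q n := by
      rw [← ENNReal.ofReal_rpow_of_nonneg dist_nonneg hs.le, ← edist_dist]
      exact (ENNReal.rpow_le_rpow (edist_le_ediam_of_mem hxn (hc n ⟨x, hxn⟩)) hs.le).trans_lt
        (hlt_q n)
    rw [ENNReal.ofReal_lt_iff_lt_toReal (by positivity) (hq_top n), ← hr_rpow n,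
      Real.rpow_lt_rpow_iff dist_nonneg (hr_pos n).le hs] at hdist
    exact mem_iUnion.2 ⟨n, hdist⟩
  obtain ⟨T, hT⟩ := isCompact_univ.elim_finite_subcover (fun n => ball (c n) (r n))
    (fun _ => isOpen_ball) fun x _ => hball x
  refine ⟨T, c, r, hr_pos, fun x => by simpa using hT (mem_univ x), ?_⟩
  simp only [hr_rpow]
  rw [← ENNReal.toReal_sum fun i _ => hq_top i]
  exact ENNReal.toReal_le_of_le_ofReal hη.le ((ENNReal.sum_le_tsum T).trans hqsum)

lemma exists_le_succ_and_forall_le_lt_of_tendsto_atTop {a : ℕ → ℝ} (ha : Tendsto a atTop atTop)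
    {b : ℝ} (h₀ : a 0 < b) : ∃ n, b ≤ a (n + 1) ∧ ∀ k ≤ n, a k < b := by
  have hex : ∃ n, b ≤ a n := (ha.eventually_ge_atTop b).exists
  have hfind : b ≤ a (Nat.find hex) := Nat.find_spec hex
  obtain ⟨n, hn⟩ := Nat.exists_eq_add_one_of_ne_zero fun h : Nat.find hex = 0 =>
    h₀.not_ge (h ▸ hfind)
  exact ⟨n, hn ▸ hfind, fun k hk => not_le.1 (Nat.find_min hex (by omega))⟩

-- The time at which a ball of radius `r` has been blown up to the scale `ρ` of bounded distortion.
lemma IsDistortionBound.exists_ball_subset_bowenBall_and_le {θ ρ : ℝ}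
    (hd : IsDistortionBound f Df θ ρ) {C β : ℝ} (hC : 0 < C) (hβ : 1 < β)
    (hexp : ∀ x n, C * β ^ n ≤ orbDeriv f Df n x) (x : X) {r : ℝ} (hr : 0 < r) (hrρ : r < ρ) :
    ∃ n, ball x r ⊆ bowenBall f (n + 1) ρ x ∧ C * β ^ n * r ≤ ρ ∧
      ∀ u ∈ ball x r, ρ ≤ θ ^ (2 * (n + 1)) * orbDeriv f Df (n + 1) u * r := by
  have hθ₀ : 0 < θ := zero_lt_one.trans hd.one_lt
  have hgrowth : ∀ n, C * β ^ n * r ≤ θ ^ n * orbDeriv f Df n x * r := fun n =>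
    mul_le_mul_of_nonneg_right ((hexp x n).trans (le_mul_of_one_le_left
      (orbDeriv_pos hd.deriv_pos n x).le (one_le_pow₀ hd.one_lt.le))) hr.le
  have htendsto : Tendsto (fun n => θ ^ n * orbDeriv f Df n x * r) atTop atTop :=
    tendsto_atTop_mono hgrowth
      (((tendsto_pow_atTop_atTop_of_one_lt hβ).const_mul_atTop hC).atTop_mul_const hr)
  obtain ⟨n, hn, hlt⟩ := exists_le_succ_and_forall_le_lt_of_tendsto_atTop htendsto
    (by simpa [orbDeriv_zero] using hrρ)
  have hsub : ball x r ⊆ bowenBall f (n + 1) ρ x :=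
    hd.ball_subset_bowenBall fun k hk => (hlt k (Nat.le_of_lt_succ hk)).le
  refine ⟨n, hsub, (hgrowth n).trans (hlt n le_rfl).le, fun u hu => ?_⟩
  calc ρ ≤ θ ^ (n + 1) * orbDeriv f Df (n + 1) x * r := hn
    _ ≤ θ ^ (n + 1) * (θ ^ (n + 1) * orbDeriv f Df (n + 1) u) * r := by
        gcongr; exact hd.orbDeriv_le (hsub hu)
    _ = θ ^ (2 * (n + 1)) * orbDeriv f Df (n + 1) u * r := by ring

-- The choice of `θ` makes the distortion `θ ^ (2 * n * s')` exactly as large as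
-- the gain `β ^ (n * (s' - s))` from lowering the exponent of `r` from `s'` to `s`.
lemma rpow_neg_le_mul_rpow_of_le {θ β C ρ r D s s' : ℝ} {n : ℕ} (hθ : 0 < θ) (hβ : 0 < β)
    (hC : 0 < C) (hρ : 0 < ρ) (hr : 0 < r) (hs' : 0 ≤ s') (hss' : s ≤ s')
    (hθs : θ ^ (2 * s') = β ^ (s' - s)) (hβr : C * β ^ n * r ≤ ρ)
    (hD : ρ ≤ θ ^ (2 * (n + 1)) * D * r) :
    D ^ (-s') ≤ (ρ * β / C) ^ (s' - s) * ρ ^ (-s') * r ^ s := by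
  have hD' : ρ / (θ ^ (2 * (n + 1)) * r) ≤ D := by
    rw [div_le_iff₀ (by positivity)]; linarith
  have hr_le : β ^ (n + 1) * r ≤ ρ * β / C := by
    rw [le_div_iff₀ hC, pow_succ]
    nlinarith
  have hdistortion : (θ ^ (2 * (n + 1))) ^ s' = (β ^ (n + 1)) ^ (s' - s) := by
    rw [pow_mul, ← Real.rpow_pow_comm (sq_nonneg θ), ← Real.rpow_pow_comm hβ.le, ← hθs,
      Real.rpow_mul hθ.le, Real.rpow_two]
  calc D ^ (-s') ≤ (ρ / (θ ^ (2 * (n + 1)) * r)) ^ (-s') :=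
        Real.rpow_le_rpow_of_nonpos (by positivity) hD' (neg_nonpos.2 hs')
    _ = (θ ^ (2 * (n + 1))) ^ s' * r ^ s' * ρ ^ (-s') := by
        rw [Real.div_rpow hρ.le (by positivity), Real.rpow_neg (by positivity : 0 ≤ _ * r),
          Real.mul_rpow (by positivity) hr.le, div_inv_eq_mul, mul_comm]
    _ = (β ^ (n + 1) * r) ^ (s' - s) * r ^ s * ρ ^ (-s') := by
        rw [hdistortion, Real.mul_rpow (by positivity) hr.le, mul_assoc _ (r ^ (s' - s)),
          ← Real.rpow_add hr, sub_add_cancel]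
    _ ≤ (ρ * β / C) ^ (s' - s) * r ^ s * ρ ^ (-s') := by gcongr
    _ = (ρ * β / C) ^ (s' - s) * ρ ^ (-s') * r ^ s := mul_right_comm _ _ _

lemma IsConfDeriv.exists_forall_injOn_iterate_ball_and_rpow_le [CompactSpace X] [PerfectSpace X]
    (hconf : IsConfDeriv f Df) (hexp : UnifExpanding f Df) {s s' : ℝ} (hs : 0 < s)
    (hss' : s < s') :
    ∃ ρ > 0, ∃ K > 0, ∀ x, ∀ r ∈ Ioo 0 ρ, ∃ n > 0, InjOn f^[n] (ball x r) ∧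
      ∀ u ∈ ball x r, orbDeriv f Df n u ^ (-s') ≤ K * r ^ s := by
  have hpos := hexp.deriv_pos
  obtain ⟨C, hC, β, hβ, hexp⟩ := hexp
  have hβ₀ : 0 < β := by linarith
  have hs' : 0 < s' := hs.trans hss'
  obtain ⟨θ, hθ, hθs⟩ : ∃ θ > 1, θ ^ (2 * s') = β ^ (s' - s) := by
    refine ⟨β ^ ((s' - s) / (2 * s')),
      Real.one_lt_rpow hβ (div_pos (sub_pos.2 hss') (by positivity)), ?_⟩
    rw [← Real.rpow_mul hβ₀.le, div_mul_cancel₀ _ (by positivity)]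
  obtain ⟨ρ, hd⟩ := hconf.exists_isDistortionBound hpos hθ
  have hρ := hd.radius_pos
  refine ⟨ρ, hρ, (ρ * β / C) ^ (s' - s) * ρ ^ (-s'), by positivity, fun x r hr => ?_⟩
  obtain ⟨n, hsub, hβr, hle⟩ := hd.exists_ball_subset_bowenBall_and_le hC hβ hexp x hr.1 hr.2
  exact ⟨n + 1, n.succ_pos, (hd.injOn_iterate_bowenBall _ x).mono hsub, fun u hu =>
    rpow_neg_le_mul_rpow_of_le (zero_lt_one.trans hθ) hβ₀ hC hρ hr.1 hs'.le hss'.le hθs hβr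
      (hle u hu)⟩

lemma pressure_nonpos_of_forall_partitionSum_le [CompactSpace X] [PerfectSpace X] [Nonempty X]
    (hconf : IsConfDeriv f Df) (hpos : ∀ x, 0 < Df x) {s : ℝ} {M : ℝ≥0∞} (hM : M ≠ ⊤)
    (h : ∀ n, partitionSum f Df s n ≤ M) : pressure f Df s ≤ 0 := by
  obtain ⟨b, hb⟩ := exists_abs_inv_mul_logPartitionSum_le hconf hpos s
  have hlim : Tendsto (fun n : ℕ => (n : ℝ)⁻¹ * Real.log M.toReal) atTop (𝓝 0) := by
    simpa using tendsto_inv_atTop_nhds_zero_nat.mul_const (Real.log M.toReal)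
  rw [pressure_eq_liminf hconf hpos, ← hlim.liminf_eq]
  refine liminf_le_liminf (.of_forall fun n => ?_)
    (isBoundedUnder_of ⟨-b, fun n => (abs_le.1 (hb n)).1⟩) hlim.isCoboundedUnder_ge
  exact mul_le_mul_of_nonneg_left (Real.log_le_log (toReal_partitionSum_pos hconf hpos s n)
    (ENNReal.toReal_mono hM (h n))) (inv_nonneg.2 n.cast_nonneg)

lemma pressure_nonpos_of_hausdorffMeasure_eq_zero [CompactSpace X] [PerfectSpace X] [Nonempty X]
    [MeasurableSpace X] [BorelSpace X] (hconf : IsConfDeriv f Df) (hexp : UnifExpanding f Df)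
    {s s' : ℝ} (hs : 0 < s) (hss' : s < s')
    (h : μH[s] (univ : Set X) = 0) : pressure f Df s' ≤ 0 := by
  have hpos := hexp.deriv_pos
  obtain ⟨ρ, hρ, K, hK, htime⟩ :=
    hconf.exists_forall_injOn_iterate_ball_and_rpow_le hexp hs hss'
  obtain ⟨η, hη, hη_min⟩ := exists_between (lt_min (inv_pos.2 hK) (Real.rpow_pos_of_pos hρ s))
  obtain ⟨t, ht, htsum⟩ :=
    exists_iUnion_eq_univ_tsum_ediam_rpow_lt hs h (ENNReal.ofReal_pos.2 hη)
  obtain ⟨T, c, r, hr, hcover, hsum⟩ := exists_ball_cover_sum_rpow_le hs hη ht htsum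
  have hrρ : ∀ i ∈ T, r i < ρ := fun i hi => by
    rw [← Real.rpow_lt_rpow_iff (hr i).le hρ.le hs]
    exact (Finset.single_le_sum (fun j _ => Real.rpow_nonneg (hr j).le s) hi).trans_lt
      (hsum.trans_lt (hη_min.trans_le (min_le_right _ _)))
  choose! τ hτ hinj hle using fun i (hi : i ∈ T) => htime (c i) (r i) ⟨hr i, hrρ i hi⟩
  have hweight : ∑ i ∈ T, ENNReal.ofReal (K * r i ^ s) ≤ 1 := by
    rw [← ENNReal.ofReal_sum_of_nonneg fun i _ => mul_nonneg hK.le (Real.rpow_nonneg (hr i).le s),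
      ← Finset.mul_sum, ENNReal.ofReal_le_one, ← le_inv_mul_iff₀ hK, mul_one]
    exact hsum.trans (hη_min.le.trans (min_le_left _ _))
  obtain ⟨M, hM, hbound⟩ := exists_forall_le_of_le_sum_mul (u := partitionSum f Df s')
    (partitionSum_ne_top hconf hpos s') hτ hweight fun n hn =>
      partitionSum_le_sum_mul_partitionSum hpos hcover hinj
        (fun i hi u hu => ENNReal.ofReal_le_ofReal (hle i hi u hu)) hn
  exact pressure_nonpos_of_forall_partitionSum_le hconf hpos hM hbound

lemma pressure_nonpos_of_dimH_lt [CompactSpace X] [PerfectSpace X] [Nonempty X]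
    (hconf : IsConfDeriv f Df) (hexp : UnifExpanding f Df) {s : ℝ}
    (h : dimH (univ : Set X) < ENNReal.ofReal s) : pressure f Df s ≤ 0 := by
  borelize X
  obtain ⟨a, hdim, ha⟩ := ENNReal.lt_iff_exists_nnreal_btwn.1 h
  have ha₀ : (0 : ℝ) < a := NNReal.coe_pos.2 (ENNReal.coe_pos.1 (pos_of_gt hdim))
  rw [← ENNReal.ofReal_coe_nnreal] at ha
  exact pressure_nonpos_of_hausdorffMeasure_eq_zero hconf hexp ha₀
    (ENNReal.ofReal_lt_ofReal_iff'.1 ha).1 (hausdorffMeasure_of_dimH_lt hdim)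

/-! ### Bowen's formula -/

theorem bowen_formula_general [CompactSpace X] [Nonempty X] [PerfectSpace X]
    (hconf : IsConfDeriv f Df) (hexp : UnifExpanding f Df) (hopen : IsOpenMap f) :
    ∃ scrit : ℝ, 0 ≤ scrit ∧
      pressure f Df scrit = 0 ∧
      (∀ s : ℝ, 0 ≤ s → s < scrit → 0 < pressure f Df s) ∧
      (∀ s : ℝ, scrit < s → pressure f Df s < 0) ∧
      dimH (univ : Set X) = ENNReal.ofReal scrit ∧
      lowerBoxDim X = ENNReal.ofReal scrit ∧
      upperBoxDim X = ENNReal.ofReal scrit := by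
  obtain ⟨s₀, hs₀, hzero⟩ := exists_pressure_eq_zero hconf hexp
  have hanti := strictAnti_pressure hconf hexp
  have hP_pos : ∀ s < s₀, 0 < pressure f Df s := fun s hs => hzero ▸ hanti hs
  have hP_neg : ∀ s, s₀ < s → pressure f Df s < 0 := fun s hs => hzero ▸ hanti hs
  have hcont : Tendsto ENNReal.ofReal (𝓝 s₀) (𝓝 (ENNReal.ofReal s₀)) :=
    ENNReal.continuous_ofReal.tendsto s₀
  have hupper : upperBoxDim X ≤ ENNReal.ofReal s₀ :=
    ge_of_tendsto (hcont.mono_left (nhdsWithin_le_nhds (s := Ioi s₀)))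
      (eventually_mem_nhdsWithin.mono fun s hs =>
        upperBoxDim_le_of_pressure_neg hconf hexp hopen (hs₀.trans (le_of_lt hs)) (hP_neg s hs))
  have hlower : ENNReal.ofReal s₀ ≤ dimH (univ : Set X) :=
    le_of_tendsto (hcont.mono_left (nhdsWithin_le_nhds (s := Iio s₀)))
      (eventually_mem_nhdsWithin.mono fun s hs =>
        not_lt.1 fun h => (hP_pos s hs).not_ge (pressure_nonpos_of_dimH_lt hconf hexp h))
  have hdim : dimH (univ : Set X) ≤ lowerBoxDim X := dimH_univ_le_lowerBoxDim
  have hbox : lowerBoxDim X ≤ upperBoxDim X := liminf_le_limsup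
  exact ⟨s₀, hs₀, hzero, fun s _ hs => hP_pos s hs, hP_neg,
    (hdim.trans (hbox.trans hupper)).antisymm hlower,
    (hbox.trans hupper).antisymm (hlower.trans hdim),
    hupper.antisymm (hlower.trans (hdim.trans hbox))⟩

end ConformalRepeller

/-- **Bowen's formula.** For a `C¹` conformal repeller `(Λ, f)` the Hausdorff dimension of `Λ`
coincides with its lower and upper box dimensions, and the common value is the unique zero
`s_crit` of the pressure function. -/
theorem bowen_formula {Λ : Type*} [MetricSpace Λ] [CompactSpace Λ] [Nonempty Λ]
    (hpt : ∀ x : Λ, (𝓝[≠] x).NeBot)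
    (f : Λ → Λ) (Df : Λ → ℝ)
    (hcont : Continuous f) (hsurj : Function.Surjective f)
    (hconf : IsConfDeriv f Df)
    (hexp : UnifExpanding f Df)
    (hopen : IsOpenMap f)
    (hfib : ∀ y : Λ, (f ⁻¹' {y}).Finite) :
    ∃ scrit : ℝ, 0 ≤ scrit ∧
      pressure f Df scrit = 0 ∧
      (∀ s : ℝ, 0 ≤ s → s < scrit → 0 < pressure f Df s) ∧
      (∀ s : ℝ, scrit < s → pressure f Df s < 0) ∧
      dimH (Set.univ : Set Λ) = ENNReal.ofReal scrit ∧
      lowerBoxDim Λ = ENNReal.ofReal scrit ∧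
      upperBoxDim Λ = ENNReal.ofReal scrit := by
  have : PerfectSpace Λ := perfectSpace_iff_forall_not_isolated.2 hpt
  exact bowen_formula_general hconf hexp hopen

end
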